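/- In the AR identification setup, if δ = (δ₁, δ₂, …, δ_{p+1}) ∈ ℝ^{p+1} satisfies P(δ₁ + Σ_{j=1}^p δ_{j+1} y_{t−j} = 0) = 1, then δ = 0. Equivalently, the random vector Z_{t−1} = (1, y_{t−1}, …, y_{t−p}) is not almost surely contained in any proper linear subspace of ℝ^{p+1}. -/

import Mathlib

open MeasureTheory Set

/-- A real-valued random variable `ε` has *full conditional support* given a
sub-σ-algebra `m` if for every `m`-measurable set `A` of positive probability and
every nonempty open interval `(a, b)`, the event `A ∩ {ε ∈ (a, b)}` has positive
probability. -/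
def FullCondSupport {Ω : Type*} {mΩ : MeasurableSpace Ω} (P : Measure Ω)
    (m : MeasurableSpace Ω) (ε : Ω → ℝ) : Prop :=
  ∀ A : Set Ω, MeasurableSet[m] A → 0 < P A →
    ∀ a b : ℝ, a < b → 0 < P (A ∩ {ω | ε ω ∈ Set.Ioo a b})

/-!
In a vanishing linear combination of `1, y_{t-1}, …, y_{t-p}`, a nonzero coefficient of the most
recent `y_s` would express `y_s`, hence the noise `ε_s = y_s - W_s`, through the past up to time
`s - 1`. Full conditional support rules this out: a `𝔊_{s-1}`-measurable variable is bounded above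
by some `n` on a `𝔊_{s-1}`-event of positive probability, on part of which the noise exceeds `n`.
Hence the most recent coefficient vanishes, and one repeats the argument with the next one.
-/

lemma FullCondSupport.not_aestronglyMeasurable {Ω : Type*} {m mΩ : MeasurableSpace Ω}
    {P : Measure Ω} [NeZero P] {ε : Ω → ℝ} (hε : FullCondSupport P m ε) :
    ¬ AEStronglyMeasurable[m] ε P := by
  rintro ⟨X, hX, hεX⟩
  have iUnion_ne_zero : P (⋃ n : ℕ, {ω | X ω ≤ n}) ≠ 0 := by
    have iUnion_eq : ⋃ n : ℕ, {ω | X ω ≤ n} = univ :=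
      iUnion_eq_univ_iff.mpr fun ω ↦ exists_nat_ge (X ω)
    simpa only [iUnion_eq, Measure.measure_univ_ne_zero] using NeZero.ne P
  obtain ⟨n, hn⟩ := exists_measure_pos_of_not_measure_iUnion_null iUnion_ne_zero
  have exceeds_pos : 0 < P ({ω | X ω ≤ n} ∩ {ω | ε ω ∈ Ioo (n : ℝ) (n + 1)}) :=
    hε _ (hX.measurable measurableSet_Iic) hn _ _ (lt_add_one _)
  refine exceeds_pos.ne' (measure_mono_null ?_ hεX)
  rintro ω ⟨hXn, hnε, -⟩
  exact (lt_of_le_of_lt hXn hnε).ne'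

section VanishingCombination

variable {Ω 𝕜 E : Type*} [DivisionRing 𝕜] [AddCommGroup E] [Module 𝕜 E] [TopologicalSpace E]
  [IsTopologicalAddGroup E] [ContinuousConstSMul 𝕜 E]

lemma eq_zero_of_ae_smul_add_eq_zero {m mΩ : MeasurableSpace Ω} {P : Measure Ω} {Y X : Ω → E}
    (hY : ¬ AEStronglyMeasurable[m] Y P) (hX : AEStronglyMeasurable[m] X P) {a : 𝕜}
    (h : ∀ᵐ ω ∂P, a • Y ω + X ω = 0) : a = 0 := by
  by_contra ha
  refine hY ((hX.neg.const_smul a⁻¹).congr ?_)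
  filter_upwards [h] with ω hω
  simp only [Pi.smul_apply, Pi.neg_apply, ← eq_neg_of_add_eq_zero_left hω, inv_smul_smul₀ ha]

theorem eq_zero_of_ae_const_add_sum_smul_eq_zero {ι : Type*} [LinearOrder ι]
    {mΩ : MeasurableSpace Ω} {P : Measure Ω} [NeZero P] {s : Finset ι}
    {m : ι → MeasurableSpace Ω} {Y : ι → Ω → E}
    (hlt : ∀ i ∈ s, ∀ j ∈ s, j < i → StronglyMeasurable[m i] (Y j))
    (hself : ∀ i ∈ s, ¬ AEStronglyMeasurable[m i] (Y i) P) {c : E} {a : ι → 𝕜}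
    (h : ∀ᵐ ω ∂P, c + ∑ i ∈ s, a i • Y i ω = 0) : c = 0 ∧ ∀ i ∈ s, a i = 0 := by
  induction s using Finset.induction_on_max with
  | empty => simpa using h
  | insert k s hk ih =>
    have hks : k ∉ s := fun hmem ↦ (hk k hmem).false
    simp only [Finset.forall_mem_insert] at hlt hself ⊢
    have hrest : StronglyMeasurable[m k] fun ω ↦ c + ∑ i ∈ s, a i • Y i ω :=
      stronglyMeasurable_const.add <| Finset.stronglyMeasurable_fun_sum _ fun i hi ↦
        (hlt.1.2 i hi (hk i hi)).const_smul (a i)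
    simp only [Finset.sum_insert hks, add_left_comm c] at h
    have hak : a k = 0 := eq_zero_of_ae_smul_add_eq_zero hself.1 hrest.aestronglyMeasurable h
    simp only [hak, zero_smul, zero_add] at h
    obtain ⟨hc, ha⟩ := ih (fun i hi ↦ (hlt.2 i hi).2) hself.2 h
    exact ⟨hc, hak, ha⟩

theorem stmt_3_general [TopologicalSpace.MetrizableSpace E] [inst : MeasurableSpace Ω]
    (P : Measure Ω) [IsProbabilityMeasure P] (p : ℕ) (t : ℤ) (𝔊 : ℤ → MeasurableSpace Ω)
    (h𝔊mono : Monotone 𝔊) (h𝔊le : ∀ s, 𝔊 s ≤ inst) (y W ε : ℤ → Ω → E)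
    (hdecomp : ∀ s, t - p ≤ s → s ≤ t - 1 → ∀ ω, y s ω = W s ω + ε s ω)
    (hy : ∀ s, t - p ≤ s → s ≤ t - 1 → StronglyMeasurable[𝔊 s] (y s))
    (hW : ∀ s, t - p ≤ s → s ≤ t - 1 → StronglyMeasurable[𝔊 (s - 1)] (W s))
    (hε : ∀ s, t - p ≤ s → s ≤ t - 1 → ¬ AEStronglyMeasurable[𝔊 (s - 1)] (ε s) P)
    (δ₁ : E) (δ : Fin p → 𝕜)
    (hzero : P {ω | δ₁ + ∑ j : Fin p, δ j • y (t - 1 - (j : ℕ)) ω = 0} = 1) :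
    δ₁ = 0 ∧ δ = 0 := by
  have hlo (j : Fin p) : t - p ≤ t - 1 - (j : ℕ) := by omega
  have hhi (j : Fin p) : t - 1 - (j : ℕ) ≤ t - 1 := by omega
  have hsum : StronglyMeasurable fun ω ↦ δ₁ + ∑ j : Fin p, δ j • y (t - 1 - (j : ℕ)) ω :=
    stronglyMeasurable_const.add <| Finset.stronglyMeasurable_fun_sum _ fun j _ ↦
      ((hy _ (hlo j) (hhi j)).mono (h𝔊le _)).const_smul (δ j)
  have hae : ∀ᵐ ω ∂P, δ₁ + ∑ j : Fin p, δ j • y (t - 1 - (j : ℕ)) ω = 0 :=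
    (mem_ae_iff_prob_eq_one (hsum.measurableSet_eq_fun stronglyMeasurable_const)).mpr hzero
  have hpast (i j : Fin p) (hij : i < j) :
      StronglyMeasurable[𝔊 (t - 1 - (i : ℕ) - 1)] (y (t - 1 - (j : ℕ))) :=
    (hy _ (hlo j) (hhi j)).mono (h𝔊mono (by omega))
  have hnew (j : Fin p) :
      ¬ AEStronglyMeasurable[𝔊 (t - 1 - (j : ℕ) - 1)] (y (t - 1 - (j : ℕ))) P := fun hmeas ↦
    hε _ (hlo j) (hhi j) <| (hmeas.sub (hW _ (hlo j) (hhi j)).aestronglyMeasurable).congr <|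
      .of_forall fun ω ↦ by simp [hdecomp _ (hlo j) (hhi j)]
  -- Time runs opposite to the lag `j`, hence the order dual.
  obtain ⟨hδ₁, hδ⟩ := eq_zero_of_ae_const_add_sum_smul_eq_zero (ι := (Fin p)ᵒᵈ)
    (s := Finset.univ) (m := fun j : Fin p ↦ 𝔊 (t - 1 - (j : ℕ) - 1))
    (fun i _ j _ hij ↦ hpast i j hij) (fun j _ ↦ hnew j) hae
  exact ⟨hδ₁, funext fun j ↦ hδ j (Finset.mem_univ j)⟩

end VanishingCombination

/-- AR identification setup: in the filtration `𝔊`, each `y s = W s + ε s`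
(`s = t-p, …, t-1`) with `y s` being `𝔊 s`-measurable, `W s` being
`𝔊 (s-1)`-measurable, and `ε s` having full conditional support given `𝔊 (s-1)`.
If `δ₁ + ∑_{j=1}^p δ_{j+1} y_{t-j} = 0` almost surely, then `δ = 0`; i.e., the
random vector `Z_{t-1} = (1, y_{t-1}, …, y_{t-p})` is not a.s. contained in any
proper linear subspace of `ℝ^{p+1}`. -/
theorem stmt_3 {Ω : Type*} [inst : MeasurableSpace Ω] (P : Measure Ω)
    [IsProbabilityMeasure P]
    (p : ℕ) (hp : 1 ≤ p) (t : ℤ)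
    (𝔊 : ℤ → MeasurableSpace Ω)
    (h𝔊mono : Monotone 𝔊) (h𝔊le : ∀ s : ℤ, 𝔊 s ≤ inst)
    (y W ε : ℤ → Ω → ℝ)
    (hdecomp : ∀ s : ℤ, t - p ≤ s → s ≤ t - 1 → ∀ ω, y s ω = W s ω + ε s ω)
    (hy : ∀ s : ℤ, t - p ≤ s → s ≤ t - 1 → Measurable[𝔊 s] (y s))
    (hW : ∀ s : ℤ, t - p ≤ s → s ≤ t - 1 → Measurable[𝔊 (s - 1)] (W s))
    (hε : ∀ s : ℤ, t - p ≤ s → s ≤ t - 1 → FullCondSupport P (𝔊 (s - 1)) (ε s))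
    (δ₁ : ℝ) (δ : Fin p → ℝ)
    (hzero : P {ω | δ₁ + ∑ j : Fin p, δ j * y (t - 1 - (j : ℕ)) ω = 0} = 1) :
    δ₁ = 0 ∧ δ = 0 :=
  stmt_3_general P p t 𝔊 h𝔊mono h𝔊le y W ε hdecomp
    (fun s hlo hhi ↦ (hy s hlo hhi).stronglyMeasurable)
    (fun s hlo hhi ↦ (hW s hlo hhi).stronglyMeasurable)
    (fun s hlo hhi ↦ (hε s hlo hhi).not_aestronglyMeasurable) δ₁ δ hzero
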